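/- Consider Gaussian BAI and define F(p,μ) = Σ_{x∈X} μ_x D(p,x), with LMO_p and LMO_μ as follows: for (p,μ) ∈ Δ_K × Δ_X let C(p,μ) = conv{ f : there exist p_n ∈ int Δ_K with p_n → p and ∇_p F(p_n,μ) → f }, LMO_p(p,μ) = conv{ q ∈ Δ_K : ∃ f ∈ C(p,μ), qᵀf = max_{q'∈Δ_K} q'ᵀf }, and LMO_μ(p,μ) = { ν ∈ Δ_X : Σ_x ν_x D(p,x) = min_{x'∈X} D(p,x') }. Let (p_n,μ_n)_{n≥0} be any sequence with (p₀,μ₀) ∈ Δ_K × Δ_X and, for every n ≥ 0, p_{n+1} = p_n + (q_n − p_n)/(n+1) with q_n ∈ LMO_p(p_n,μ_n) and μ_{n+1} = μ_n + (ν_n − μ_n)/(n+1) with ν_n ∈ LMO_μ(p_n,μ_n). Then the game value converges: lim_{n→∞} F(p_n,μ_n) = F*, where F* = max_{p∈Δ_K} min_{x∈X} D(p,x). -/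

import Mathlib

open Filter

noncomputable section

/-- The relative interior of the standard simplex. -/
def simplexInterior (K : ℕ) : Set (Fin K → ℝ) :=
  {p | p ∈ stdSimplex ℝ (Fin K) ∧ ∀ i, 0 < p i}

/-- Gaussian best-arm-identification payoff. -/
def Dg {K : ℕ} (θ : Fin K → ℝ) (σ : ℝ) (Istar : Fin K)
    (p : Fin K → ℝ) (x : Fin K) : ℝ :=
  if 0 < p Istar + p x then
    ((θ Istar - θ x) ^ 2 / (2 * σ ^ 2)) * (p Istar * p x / (p Istar + p x))
  else 0

/-- The mixed payoff `F(p,μ) = ∑_{x∈X} μ_x D(p,x)` over scenarios `X = [K] \ {I*}`. -/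
def Fg {K : ℕ} (θ : Fin K → ℝ) (σ : ℝ) (Istar : Fin K)
    (p : Fin K → ℝ) (μ : {x : Fin K // x ≠ Istar} → ℝ) : ℝ :=
  ∑ x : {x : Fin K // x ≠ Istar}, μ x * Dg θ σ Istar p x.1

/-- Gradient of `F` in `p`, obtained from the Fréchet derivative. -/
def gradFg {K : ℕ} (θ : Fin K → ℝ) (σ : ℝ) (Istar : Fin K)
    (p : Fin K → ℝ) (μ : {x : Fin K // x ≠ Istar} → ℝ) : Fin K → ℝ :=
  fun i => fderiv ℝ (fun p' => Fg θ σ Istar p' μ) p (Pi.single i 1)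

/-- `C(p,μ)`: convex hull of limits of gradients `∇_p F(p_n, μ)` along interior
sequences `p_n → p`. -/
def Cg {K : ℕ} (θ : Fin K → ℝ) (σ : ℝ) (Istar : Fin K)
    (p : Fin K → ℝ) (μ : {x : Fin K // x ≠ Istar} → ℝ) : Set (Fin K → ℝ) :=
  convexHull ℝ {f : Fin K → ℝ | ∃ pn : ℕ → (Fin K → ℝ),
    (∀ n, pn n ∈ simplexInterior K) ∧
    Tendsto pn atTop (nhds p) ∧
    Tendsto (fun n => gradFg θ σ Istar (pn n) μ) atTop (nhds f)}

/-- `LMO_p(p,μ) = conv{ q ∈ Δ_K : ∃ f ∈ C(p,μ), qᵀf = max_{q'∈Δ_K} q'ᵀf }`. -/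
def LMOpg {K : ℕ} (θ : Fin K → ℝ) (σ : ℝ) (Istar : Fin K)
    (p : Fin K → ℝ) (μ : {x : Fin K // x ≠ Istar} → ℝ) : Set (Fin K → ℝ) :=
  convexHull ℝ {q : Fin K → ℝ | q ∈ stdSimplex ℝ (Fin K) ∧
    ∃ f ∈ Cg θ σ Istar p μ, ∀ q' ∈ stdSimplex ℝ (Fin K),
      ∑ i, q' i * f i ≤ ∑ i, q i * f i}

/-- `LMO_μ(p,μ) = { ν ∈ Δ_X : ∑_x ν_x D(p,x) = min_{x'∈X} D(p,x') }`. -/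
def LMOmug {K : ℕ} (θ : Fin K → ℝ) (σ : ℝ) (Istar : Fin K)
    (p : Fin K → ℝ) : Set ({x : Fin K // x ≠ Istar} → ℝ) :=
  {ν : {x : Fin K // x ≠ Istar} → ℝ | ν ∈ stdSimplex ℝ {x : Fin K // x ≠ Istar} ∧
    ∑ x : {x : Fin K // x ≠ Istar}, ν x * Dg θ σ Istar p x.1 =
      ⨅ x' : {x : Fin K // x ≠ Istar}, Dg θ σ Istar p x'.1}


/-- Lipschitz on `[ε,1]`. -/
def LipI (f : ℝ → ℝ) (ε : ℝ) : Prop :=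
  ∃ C : ℝ, 0 ≤ C ∧ ∀ s ∈ Set.Icc ε 1, ∀ t ∈ Set.Icc ε 1, |f s - f t| ≤ C * |s - t|

lemma LipI.bdd {f : ℝ → ℝ} {ε : ℝ} (h : LipI f ε) :
    ∃ B : ℝ, 0 ≤ B ∧ ∀ s ∈ Set.Icc ε 1, |f s| ≤ B := by
  obtain ⟨C, hC, h⟩ := h
  refine ⟨|f 1| + C * (|1 - ε|), by positivity, fun s hs => ?_⟩
  have h1 := h s hs 1 ⟨hs.1.trans hs.2, le_rfl⟩
  have h2 : |s - 1| ≤ |1 - ε| := by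
    rw [abs_of_nonpos (by linarith [hs.2]), abs_of_nonneg (by linarith [hs.1, hs.2])]
    linarith [hs.1]
  have h3 : |f s| ≤ |f s - f 1| + |f 1| := by
    have := abs_add_le (f s - f 1) (f 1); simpa using this
  nlinarith

lemma LipI.const (c ε : ℝ) : LipI (fun _ => c) ε := ⟨0, le_rfl, by simp⟩

lemma LipI.add {f g : ℝ → ℝ} {ε : ℝ} (hf : LipI f ε) (hg : LipI g ε) :
    LipI (fun t => f t + g t) ε := by
  obtain ⟨C, hC, hf⟩ := hf
  obtain ⟨D, hD, hg⟩ := hg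
  refine ⟨C + D, by positivity, fun s hs t ht => ?_⟩
  have := abs_add_le (f s - f t) (g s - g t)
  have h1 := hf s hs t ht
  have h2 := hg s hs t ht
  calc _ = |f s - f t + (g s - g t)| := by ring_nf
    _ ≤ _ := by linarith

lemma LipI.neg {f : ℝ → ℝ} {ε : ℝ} (hf : LipI f ε) : LipI (fun t => - f t) ε := by
  obtain ⟨C, hC, hf⟩ := hf
  refine ⟨C, hC, fun s hs t ht => ?_⟩
  have := hf t ht s hs
  rw [abs_sub_comm s t]
  calc _ = |f t - f s| := by ring_nf
    _ ≤ _ := this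

lemma LipI.mul {f g : ℝ → ℝ} {ε : ℝ} (hf : LipI f ε) (hg : LipI g ε) :
    LipI (fun t => f t * g t) ε := by
  obtain ⟨B, hB, hfB⟩ := hf.bdd
  obtain ⟨E, hE, hgE⟩ := hg.bdd
  obtain ⟨C, hC, hf⟩ := hf
  obtain ⟨D, hD, hg⟩ := hg
  refine ⟨B * D + E * C, by positivity, fun s hs t ht => ?_⟩
  have h1 := hf s hs t ht
  have h2 := hg s hs t ht
  calc |f s * g s - f t * g t| = |f s * (g s - g t) + g t * (f s - f t)| := by ring_nf
    _ ≤ |f s * (g s - g t)| + |g t * (f s - f t)| := abs_add_le _ _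
    _ = |f s| * |g s - g t| + |g t| * |f s - f t| := by rw [abs_mul, abs_mul]
    _ ≤ B * (D * |s - t|) + E * (C * |s - t|) := by
        have := hfB s hs
        have := hgE t ht
        gcongr
    _ = _ := by ring

lemma LipI.inv {f : ℝ → ℝ} {ε d : ℝ} (hd : 0 < d) (hf : LipI f ε)
    (hfd : ∀ t ∈ Set.Icc ε 1, d ≤ f t) : LipI (fun t => (f t)⁻¹) ε := by
  obtain ⟨C, hC, hf⟩ := hf
  refine ⟨C / (d * d), by positivity, fun s hs t ht => ?_⟩
  have h1 := hfd s hs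
  have h2 := hfd t ht
  have p1 : 0 < f s := by linarith
  have p2 : 0 < f t := by linarith
  have : (f s)⁻¹ - (f t)⁻¹ = (f t - f s) / (f s * f t) := by field_simp
  rw [this, abs_div, abs_of_pos (mul_pos p1 p2), abs_sub_comm]
  calc |f s - f t| / (f s * f t) ≤ (C * |s - t|) / (d * d) := by
        have := hf s hs t ht
        gcongr
    _ = _ := by ring

lemma LipI.sum {X : Type*} (S : Finset X) {f : X → ℝ → ℝ} {ε : ℝ} (hf : ∀ x, LipI (f x) ε) :
    LipI (fun t => ∑ x ∈ S, f x t) ε := by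
  classical
  induction S using Finset.induction_on with
  | empty => simpa using LipI.const 0 ε
  | insert a s ha ih =>
    simp only [Finset.sum_insert ha]
    exact (hf a).add ih

lemma LipI.sup {X : Type*} [Fintype X] [Nonempty X] {f : X → ℝ → ℝ} {ε : ℝ}
    (hf : ∀ x, LipI (f x) ε) : LipI (fun t => ⨆ x, f x t) ε := by
  choose C hC h using hf
  have key : ∀ s ∈ Set.Icc ε 1, ∀ t ∈ Set.Icc ε 1,
      (⨆ x, f x s) ≤ (⨆ x, f x t) + (∑ x, C x) * |s - t| := by
    intro s hs t ht
    refine ciSup_le fun x => ?_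
    have h1 := (abs_le.1 (h x s hs t ht)).2
    have h2 : f x t ≤ ⨆ x, f x t := le_ciSup (f := fun x => f x t) (Set.finite_range _).bddAbove x
    have h3 : C x ≤ ∑ x, C x := Finset.single_le_sum (fun i _ => hC i) (Finset.mem_univ x)
    have h4 := mul_le_mul_of_nonneg_right h3 (abs_nonneg (s - t))
    linarith
  refine ⟨∑ x, C x, Finset.sum_nonneg fun i _ => hC i, fun s hs t ht => ?_⟩
  have h1 := key s hs t ht
  have h2 := key t ht s hs
  rw [abs_sub_comm t s] at h2
  rw [abs_le]; constructor <;> linarith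

lemma LipI.lipschitz {f : ℝ → ℝ} {ε : ℝ} (hf : LipI f ε) :
    ∃ C : NNReal, LipschitzOnWith C f (Set.Icc ε 1) := by
  obtain ⟨C, hC, hf⟩ := hf
  refine ⟨⟨C, hC⟩, LipschitzOnWith.of_dist_le_mul fun s hs t ht => ?_⟩
  rw [Real.dist_eq, Real.dist_eq]
  exact hf s hs t ht

lemma LipI.contAt {f : ℝ → ℝ} {ε t : ℝ} (hf : LipI f ε) (ht : t ∈ Set.Ioo ε 1) :
    ContinuousAt f t := by
  obtain ⟨C, h⟩ := hf.lipschitz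
  exact h.continuousOn.continuousAt (Icc_mem_nhds ht.1 ht.2)

lemma LipI.ac {f : ℝ → ℝ} {ε : ℝ} (hε : ε ≤ 1) (hf : LipI f ε) :
    AbsolutelyContinuousOnInterval f ε 1 := by
  obtain ⟨C, h⟩ := hf.lipschitz
  rw [← Set.uIcc_of_le hε] at h
  exact h.absolutelyContinuousOnInterval

/-- If a coordinate can only move when active, its derivative vanishes when inactive. -/
lemma deriv_zero_of_inactive {u d : ℝ → ℝ} {t u' : ℝ} (ht : t ∈ Set.Ioo (0:ℝ) 1)
    (hd : ContinuousAt d t) (hd0 : 0 < d t) (hu : HasDerivAt u u' t)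
    (hch : ∀ s r, 0 < s → s < r → r ≤ 1 → u s ≠ u r → ∃ τ ∈ Set.Icc s r, d τ ≤ 0) : u' = 0 := by
  have h1 : ∀ᶠ s in nhds t, 0 < d s ∧ s ∈ Set.Ioo (0:ℝ) 1 :=
    (hd.eventually (lt_mem_nhds hd0)).and (Ioo_mem_nhds ht.1 ht.2)
  obtain ⟨η, hη, h2⟩ := Metric.eventually_nhds_iff_ball.1 h1
  have h3 : u =ᶠ[nhds t] fun _ => u t := by
    filter_upwards [Metric.ball_mem_nhds t hη] with s hs
    by_contra hne
    have hconv := (convex_ball t η).ordConnected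
    have hsI := (h2 s hs).2
    rcases lt_trichotomy s t with h | h | h
    · obtain ⟨τ, hτ, hle⟩ := hch s t hsI.1 h ht.2.le hne
      have := (h2 τ (hconv.out hs (Metric.mem_ball_self hη) hτ)).1
      linarith
    · exact hne (by rw [h])
    · obtain ⟨τ, hτ, hle⟩ := hch t s ht.1 h hsI.2.le (Ne.symm hne)
      have := (h2 τ (hconv.out (Metric.mem_ball_self hη) hs hτ)).1
      linarith
  have h4 : HasDerivAt u 0 t := (hasDerivAt_const t (u t)).congr_of_eventuallyEq h3
  exact hu.unique h4

/-- Danskin: derivative of the max equals that of the weighted sum. -/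
lemma danskin {ι : Type*} [Fintype ι] [Nonempty ι] {u h : ι → ℝ → ℝ} {u' h' : ι → ℝ} {t H' : ℝ}
    (ht : t ∈ Set.Ioo (0:ℝ) 1)
    (hsum : ∀ t ∈ Set.Ioo (0:ℝ) 1, ∑ i, u i t = t)
    (hu : ∀ i, HasDerivAt (u i) (u' i) t) (hh : ∀ i, HasDerivAt (h i) (h' i) t)
    (hH : HasDerivAt (fun t => ⨆ i, h i t) H' t)
    (hch : ∀ i s r, 0 < s → s < r → r ≤ 1 → u i s ≠ u i r →
      ∃ τ ∈ Set.Icc s r, ∀ j, h j τ ≤ h i τ) :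
    H' = ∑ i, u' i * h' i := by
  have hle : ∀ i s, h i s ≤ ⨆ i, h i s := fun i s =>
    le_ciSup (f := fun x => h x s) (Set.finite_range _).bddAbove i
  have h1 : ∀ i, u' i * h' i = u' i * H' := by
    intro i
    rcases (hle i t).lt_or_eq with hlt | heq
    · have : u' i = 0 := by
        refine deriv_zero_of_inactive (d := fun s => (⨆ i, h i s) - h i s) ht
          (hH.continuousAt.sub (hh i).continuousAt) (by simpa using hlt) (hu i) ?_
        intro s r hs hsr hr hne
        obtain ⟨τ, hτ, hj⟩ := hch i s r hs hsr hr hne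
        exact ⟨τ, hτ, by simpa using ciSup_le hj⟩
      rw [this]; simp
    · have hm : IsLocalMin (fun s => (⨆ i, h i s) - h i s) t := by
        refine Eventually.of_forall fun s => ?_
        have := hle i s
        simp only [heq]; linarith
      have := hm.hasDerivAt_eq_zero (hH.sub (hh i))
      rw [show h' i = H' by linarith]
  have h2 : ∑ i, u' i = 1 := by
    have e1 : HasDerivAt (fun s => ∑ i, u i s) (∑ i, u' i) t :=
      HasDerivAt.fun_sum fun i _ => hu i
    have e2 : HasDerivAt (fun s => ∑ i, u i s) 1 t := by
      refine (hasDerivAt_id t).congr_of_eventuallyEq ?_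
      filter_upwards [Ioo_mem_nhds ht.1 ht.2] with s hs using hsum s hs
    exact e1.unique e2
  simp_rw [h1, ← Finset.sum_mul, h2, one_mul]

lemma core0 {ι X : Type*} [Fintype ι] [Nonempty ι] [Fintype X] [Nonempty X]
    {u h : ι → ℝ → ℝ} {v g : X → ℝ → ℝ} {C : ℝ}
    (hu : ∀ i ε, 0 < ε → LipI (u i) ε) (hv : ∀ i ε, 0 < ε → LipI (v i) ε)
    (hh : ∀ i ε, 0 < ε → LipI (h i) ε) (hg : ∀ i ε, 0 < ε → LipI (g i) ε)
    (husum : ∀ t ∈ Set.Ioo (0:ℝ) 1, ∑ i, u i t = t)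
    (hvsum : ∀ t ∈ Set.Ioo (0:ℝ) 1, ∑ i, v i t = t)
    (huch : ∀ i s r, 0 < s → s < r → r ≤ 1 → u i s ≠ u i r →
      ∃ τ ∈ Set.Icc s r, ∀ j, h j τ ≤ h i τ)
    (hvch : ∀ i s r, 0 < s → s < r → r ≤ 1 → v i s ≠ v i r →
      ∃ τ ∈ Set.Icc s r, ∀ j, g i τ ≤ g j τ)
    (hder : ∀ t ∈ Set.Ioo (0:ℝ) 1, ∀ (u' : ι → ℝ) (v' : X → ℝ), (∀ i, HasDerivAt (u i) (u' i) t) →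
      (∀ i, HasDerivAt (v i) (v' i) t) → ∃ (h' : ι → ℝ) (g' : X → ℝ), (∀ i, HasDerivAt (h i) (h' i) t) ∧
      (∀ i, HasDerivAt (g i) (g' i) t) ∧ ∑ i, u' i * h' i ≤ ∑ x, v' x * g' x)
    (hhb : ∀ i, ∀ t ∈ Set.Ioo (0:ℝ) 1, h i t ≤ C * t)
    (hgb : ∀ i, ∀ t ∈ Set.Ioo (0:ℝ) 1, 0 ≤ g i t) (i : ι) (x : X) :
    h i 1 ≤ g x 1 := by
  set H : ℝ → ℝ := fun t => ⨆ i, h i t with hHdef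
  set G : ℝ → ℝ := fun t => ⨆ x, - g x t with hGdef
  have hHL : ∀ ε, 0 < ε → LipI H ε := fun ε hε => LipI.sup fun i => hh i ε hε
  have hGL : ∀ ε, 0 < ε → LipI G ε := fun ε hε => LipI.sup fun i => (hg i ε hε).neg
  have step : ∀ ε ∈ Set.Ioo (0:ℝ) 1, H 1 + G 1 ≤ C * ε := by
    intro ε hε
    have hW : LipI (fun t => H t + G t) ε := (hHL ε hε.1).add (hGL ε hε.1)
    have hac := hW.ac hε.2.le
    have hint := hac.integral_deriv_eq_sub
    have hneg : ∫ t in ε..1, deriv (fun t => H t + G t) t ≤ 0 := by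
      have : ∫ t in ε..1, deriv (fun t => H t + G t) t ≤ ∫ t in ε..1, (0:ℝ) := by
        refine intervalIntegral.integral_mono_ae_restrict hε.2.le
          hac.intervalIntegrable_deriv (by simp) ?_
        have a1 := ((hHL ε hε.1).ac hε.2.le).ae_differentiableAt
        have a2 := ((hGL ε hε.1).ac hε.2.le).ae_differentiableAt
        have a3 : ∀ᵐ t, ∀ i, t ∈ Set.uIcc ε 1 → DifferentiableAt ℝ (u i) t :=
          MeasureTheory.ae_all_iff.2 fun i => ((hu i ε hε.1).ac hε.2.le).ae_differentiableAt
        have a4 : ∀ᵐ t, ∀ i, t ∈ Set.uIcc ε 1 → DifferentiableAt ℝ (v i) t :=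
          MeasureTheory.ae_all_iff.2 fun i => ((hv i ε hε.1).ac hε.2.le).ae_differentiableAt
        have a5 : ∀ᵐ t : ℝ, t ≠ 1 := by
          simp [MeasureTheory.ae_iff]
        rw [Filter.EventuallyLE, MeasureTheory.ae_restrict_iff' measurableSet_Icc]
        filter_upwards [a1, a2, a3, a4, a5] with t b1 b2 b3 b4 b5 ht
        have htu : t ∈ Set.uIcc ε 1 := by rwa [Set.uIcc_of_le hε.2.le]
        have ht1 : t ∈ Set.Ioo (0:ℝ) 1 := ⟨hε.1.trans_le ht.1, lt_of_le_of_ne ht.2 b5⟩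
        have c1 := (b1 htu).hasDerivAt
        have c2 := (b2 htu).hasDerivAt
        obtain ⟨h', g', k1, k2, k3⟩ := hder t ht1 (fun i => deriv (u i) t) (fun i => deriv (v i) t)
          (fun i => (b3 i htu).hasDerivAt) (fun i => (b4 i htu).hasDerivAt)
        have d1 := danskin ht1 husum (fun i => (b3 i htu).hasDerivAt) k1 c1 huch
        have d2 := danskin (h := fun x t => - g x t) ht1 hvsum (fun i => (b4 i htu).hasDerivAt)
          (fun i => (k2 i).neg) c2 (by
            intro i s r hs hsr hr hne
            obtain ⟨τ, hτ, hj⟩ := hvch i s r hs hsr hr hne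
            exact ⟨τ, hτ, fun j => by simpa using hj j⟩)
        have := (c1.fun_add c2).deriv
        rw [this, d1, d2]
        simp only [mul_neg, Finset.sum_neg_distrib]
        linarith
      simpa using this
    have hb : H ε ≤ C * ε := ciSup_le fun i => hhb i ε hε
    have hb2 : G ε ≤ 0 := ciSup_le fun i => by simpa using hgb i ε hε

    linarith
  have h0 : H 1 + G 1 ≤ 0 := by
    by_contra hcon
    push Not at hcon
    have hC : 0 ≤ |C| := abs_nonneg C
    have h1 := step (min (1/2) ((H 1 + G 1) / (2 * (|C| + 1))))
      ⟨by positivity, (min_le_left _ _).trans_lt (by norm_num)⟩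
    have h2 : C * min (1/2) ((H 1 + G 1) / (2 * (|C| + 1))) ≤
        (|C| + 1) * ((H 1 + G 1) / (2 * (|C| + 1))) := by
      have e1 : C ≤ |C| + 1 := by linarith [le_abs_self C]
      exact mul_le_mul e1 (min_le_right _ _) (by positivity) (by positivity)
    have h3 : (|C| + 1) * ((H 1 + G 1) / (2 * (|C| + 1))) = (H 1 + G 1) / 2 := by
      field_simp
    linarith
  have h1 : h i 1 ≤ H 1 := le_ciSup (f := fun x => h x 1) (Set.finite_range _).bddAbove i
  have h2 : - g x 1 ≤ G 1 := le_ciSup (f := fun x => - g x 1) (Set.finite_range _).bddAbove x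
  linarith

lemma ultra_lim (U : Ultrafilter ℕ) {f : ℕ → ℝ} {a b : ℝ}
    (h : ∀ᶠ k in (U : Filter ℕ), f k ∈ Set.Icc a b) :
    ∃ c ∈ Set.Icc a b, Tendsto f U (nhds c) := by
  have := (isCompact_Icc (a := a) (b := b)).ultrafilter_le_nhds (U.map f)
    (by rw [le_principal_iff]; exact h)
  obtain ⟨c, hc, h⟩ := this
  exact ⟨c, hc, h⟩

lemma cum_mono {ι : Type*} [Fintype ι] {q : ℕ → ι → ℝ} (hq : ∀ n, q n ∈ stdSimplex ℝ ι)
    (i : ι) {m n : ℕ} (hmn : m ≤ n) :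
    0 ≤ ∑ l ∈ Finset.range n, q l i - ∑ l ∈ Finset.range m, q l i ∧
    ∑ l ∈ Finset.range n, q l i - ∑ l ∈ Finset.range m, q l i ≤ (n : ℝ) - m := by
  rw [← Finset.sum_Ico_eq_sub _ hmn]
  refine ⟨Finset.sum_nonneg fun l _ => (hq l).1 i, ?_⟩
  calc ∑ l ∈ Finset.Ico m n, q l i ≤ ∑ l ∈ Finset.Ico m n, (1:ℝ) := by
        refine Finset.sum_le_sum fun l _ => ?_
        rw [← (hq l).2]
        exact Finset.single_le_sum (fun j _ => (hq l).1 j) (Finset.mem_univ i)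
    _ = _ := by simp [Nat.cast_sub hmn]

lemma cum_lip {ι : Type*} [Fintype ι] {q : ℕ → ι → ℝ} (hq : ∀ n, q n ∈ stdSimplex ℝ ι)
    (i : ι) (m n : ℕ) :
    |∑ l ∈ Finset.range n, q l i - ∑ l ∈ Finset.range m, q l i| ≤ |(n : ℝ) - m| := by
  rcases le_total m n with h | h
  · have := cum_mono hq i h
    rw [abs_of_nonneg this.1]
    exact this.2.trans (le_abs_self _)
  · have := cum_mono hq i h
    rw [abs_sub_comm, abs_of_nonneg this.1, abs_sub_comm]
    exact this.2.trans (le_abs_self _)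

lemma floor_lim {U : Ultrafilter ℕ} (hU : (U : Filter ℕ) ≤ atTop) {t : ℝ} (ht : 0 ≤ t) :
    Tendsto (fun k : ℕ => ((⌊t * (k:ℝ)⌋₊ : ℕ) : ℝ) / (k:ℝ)) U (nhds t) :=
  ((tendsto_nat_floor_mul_div_atTop ht).comp tendsto_natCast_atTop_atTop).mono_left hU

lemma ulim {ι : Type*} [Fintype ι] {q : ℕ → ι → ℝ} (hq : ∀ n, q n ∈ stdSimplex ℝ ι)
    {U : Ultrafilter ℕ} (hU : (U : Filter ℕ) ≤ atTop) :
    ∃ A : ι → ℝ → ℝ, ∀ t, 0 ≤ t → ∀ N : ℕ → ℕ,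
      Tendsto (fun k => (N k : ℝ) / (k:ℝ)) U (nhds t) →
      ∀ i, Tendsto (fun k : ℕ => (∑ l ∈ Finset.range (N k), q l i) / (k:ℝ)) U (nhds (A i t)) := by
  have hpos : ∀ᶠ k : ℕ in (U : Filter ℕ), 0 < (k:ℝ) :=
    hU ((eventually_gt_atTop 0).mono fun k hk => by exact_mod_cast hk)
  have ex : ∀ i t, ∃ a, 0 ≤ t → Tendsto
      (fun k : ℕ => (∑ l ∈ Finset.range ⌊t * (k:ℝ)⌋₊, q l i) / (k:ℝ)) U (nhds a) := by
    intro i t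
    by_cases ht : 0 ≤ t
    · obtain ⟨c, -, hc⟩ := ultra_lim U (a := 0) (b := t)
        (f := fun k : ℕ => (∑ l ∈ Finset.range ⌊t * (k:ℝ)⌋₊, q l i) / (k:ℝ)) (by
          filter_upwards [hpos] with k hk
          have := cum_mono hq i (Nat.zero_le ⌊t * (k:ℝ)⌋₊)
          simp only [Finset.range_zero, Finset.sum_empty, sub_zero, Nat.cast_zero] at this
          have h2 := Nat.floor_le (a := t * (k:ℝ)) (by positivity)
          refine ⟨div_nonneg this.1 hk.le, ?_⟩
          rw [div_le_iff₀ hk]; linarith)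
      exact ⟨c, fun _ => hc⟩
    · exact ⟨0, fun h => absurd h ht⟩
  choose A hA using ex
  refine ⟨A, fun t ht N hN i => ?_⟩
  have h1 := hA i t ht
  have h2 : Tendsto (fun k : ℕ => (∑ l ∈ Finset.range (N k), q l i) / (k:ℝ) -
      (∑ l ∈ Finset.range ⌊t * (k:ℝ)⌋₊, q l i) / (k:ℝ)) U (nhds 0) := by
    have h3 := (hN.sub (floor_lim hU ht)).abs
    rw [sub_self, abs_zero] at h3
    refine squeeze_zero_norm' ?_ h3
    filter_upwards [hpos] with k hk
    rw [Real.norm_eq_abs, ← sub_div, ← sub_div, abs_div, abs_div]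
    have := cum_lip hq i ⌊t * (k:ℝ)⌋₊ (N k)
    gcongr
  simpa using h2.add h1

section limitcurve
variable {ι : Type*} [Fintype ι] {q : ℕ → ι → ℝ} (hq : ∀ n, q n ∈ stdSimplex ℝ ι)
    {U : Ultrafilter ℕ} (hU : (U : Filter ℕ) ≤ atTop) {A : ι → ℝ → ℝ}
    (hA : ∀ t, 0 ≤ t → ∀ N : ℕ → ℕ,
      Tendsto (fun k => (N k : ℝ) / (k:ℝ)) U (nhds t) →
      ∀ i, Tendsto (fun k : ℕ => (∑ l ∈ Finset.range (N k), q l i) / (k:ℝ)) U (nhds (A i t)))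
include hq hU hA

lemma curve_nonneg (i : ι) {t : ℝ} (ht : 0 ≤ t) : 0 ≤ A i t :=
  ge_of_tendsto' (hA t ht _ (floor_lim hU ht) i) fun k =>
    div_nonneg (Finset.sum_nonneg fun l _ => (hq l).1 i) (Nat.cast_nonneg k)

lemma curve_lip (i : ι) {s t : ℝ} (hs : 0 ≤ s) (ht : 0 ≤ t) : |A i s - A i t| ≤ |s - t| := by
  have h1 := ((hA s hs _ (floor_lim hU hs) i).sub (hA t ht _ (floor_lim hU ht) i)).abs
  have h2 := ((floor_lim hU hs).sub (floor_lim hU ht)).abs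
  refine le_of_tendsto_of_tendsto' h1 h2 fun k => ?_
  rw [← sub_div, ← sub_div, abs_div, abs_div]
  have := cum_lip hq i ⌊t * (k:ℝ)⌋₊ ⌊s * (k:ℝ)⌋₊
  gcongr

lemma curve_lipI (i : ι) {ε : ℝ} (hε : 0 < ε) : LipI (A i) ε :=
  ⟨1, zero_le_one, fun s hs t ht => by
    rw [one_mul]; exact curve_lip hq hU hA i (hε.le.trans hs.1) (hε.le.trans ht.1)⟩

lemma curve_sum {t : ℝ} (ht : 0 ≤ t) : ∑ i, A i t = t := by
  have h1 := tendsto_finsetSum (Finset.univ : Finset ι)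
    (fun i _ => hA t ht _ (floor_lim hU ht) i)
  refine tendsto_nhds_unique h1 ?_
  refine (floor_lim hU ht).congr fun k => ?_
  rw [← Finset.sum_div, Finset.sum_comm]
  simp [(hq _).2]

lemma curve_change (i : ι) {s t : ℝ} (hs : 0 ≤ s) (hst : s < t) (hne : A i s ≠ A i t) :
    ∃ τ ∈ Set.Icc s t, ∃ N : ℕ → ℕ, Tendsto (fun k => (N k : ℝ) / (k:ℝ)) U (nhds τ) ∧
      ∀ᶠ k in (U : Filter ℕ), 0 < q (N k) i := by
  have ht := hs.trans hst.le
  have ls := floor_lim hU hs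
  have lt := floor_lim hU ht
  have hpos : ∀ᶠ k : ℕ in (U : Filter ℕ), 0 < (k:ℝ) :=
    hU ((eventually_gt_atTop 0).mono fun k hk => by exact_mod_cast hk)
  have h1 := ((hA s hs _ ls i).sub (hA t ht _ lt i)).eventually_ne (sub_ne_zero.2 hne)
  have h2 : ∀ k : ℕ, ∃ n : ℕ, (0 < (k:ℝ) ∧ (∑ l ∈ Finset.range ⌊s * (k:ℝ)⌋₊, q l i) / (k:ℝ) -
      (∑ l ∈ Finset.range ⌊t * (k:ℝ)⌋₊, q l i) / (k:ℝ) ≠ 0) →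
      (⌊s * (k:ℝ)⌋₊ ≤ n ∧ n ≤ ⌊t * (k:ℝ)⌋₊ ∧ 0 < q n i) := by
    intro k
    by_contra hcon
    push Not at hcon
    have hk := (hcon 0).1
    have hle : ⌊s * (k:ℝ)⌋₊ ≤ ⌊t * (k:ℝ)⌋₊ := Nat.floor_mono (by gcongr)
    refine hk.2 ?_
    rw [← sub_div, ← neg_sub, ← Finset.sum_Ico_eq_sub _ hle, Finset.sum_eq_zero, neg_zero, zero_div]
    intro n hn
    rw [Finset.mem_Ico] at hn
    exact le_antisymm ((hcon n).2 hn.1 hn.2.le) ((hq n).1 i)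
  choose N hN using h2
  have h3 : ∀ᶠ k : ℕ in (U : Filter ℕ), ⌊s * (k:ℝ)⌋₊ ≤ N k ∧ N k ≤ ⌊t * (k:ℝ)⌋₊ ∧ 0 < q (N k) i := by
    filter_upwards [h1, hpos] with k a b using hN k ⟨b, a⟩
  obtain ⟨τ, -, hτ⟩ := ultra_lim U (a := 0) (b := t) (f := fun k => (N k : ℝ) / (k:ℝ)) (by
    filter_upwards [h3, hpos] with k a hk
    refine ⟨by positivity, ?_⟩
    rw [div_le_iff₀ hk]
    exact (Nat.cast_le.2 a.2.1).trans (Nat.floor_le (by positivity)))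
  refine ⟨τ, ⟨le_of_tendsto_of_tendsto ls hτ ?_, le_of_tendsto_of_tendsto hτ lt ?_⟩, N, hτ,
    h3.mono fun k h => h.2.2⟩
  · filter_upwards [h3, hpos] with k a hk
    have := Nat.cast_le (α := ℝ).2 a.1
    gcongr
  · filter_upwards [h3, hpos] with k a hk
    have := Nat.cast_le (α := ℝ).2 a.2.1
    gcongr

end limitcurve

lemma sum_split {K : ℕ} (I : Fin K) (φ : Fin K → ℝ) :
    ∑ i, φ i = φ I + ∑ x : {x : Fin K // x ≠ I}, φ x.1 :=
  Fintype.sum_eq_add_sum_subtype_ne φ I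

/-- Explicit gradient of the payoff. -/
def hf {K : ℕ} (c : Fin K → ℝ) (I : Fin K) (A : Fin K → ℝ) (M : {x : Fin K // x ≠ I} → ℝ)
    (i : Fin K) : ℝ :=
  if h : i = I then ∑ x : {x : Fin K // x ≠ I}, M x * c x.1 * (A x.1 / (A I + A x.1)) ^ 2
  else M ⟨i, h⟩ * c i * (A I / (A I + A i)) ^ 2

/-- Explicit payoff. -/
def gf {K : ℕ} (c : Fin K → ℝ) (I : Fin K) (A : Fin K → ℝ) (x : Fin K) : ℝ :=
  c x * (A I * A x / (A I + A x))

section explicit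
variable {K : ℕ} {c : Fin K → ℝ} {I : Fin K}

lemma hf_I (A : Fin K → ℝ) (M : {x : Fin K // x ≠ I} → ℝ) :
    hf c I A M I = ∑ x : {x : Fin K // x ≠ I}, M x * c x.1 * (A x.1 / (A I + A x.1)) ^ 2 := by
  simp [hf]

lemma hf_x (A : Fin K → ℝ) (M : {x : Fin K // x ≠ I} → ℝ) (x : {x : Fin K // x ≠ I}) :
    hf c I A M x.1 = M x * c x.1 * (A I / (A I + A x.1)) ^ 2 := by
  simp [hf, x.2]

lemma hf_sum (A B : Fin K → ℝ) (M : {x : Fin K // x ≠ I} → ℝ) :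
    ∑ i, B i * hf c I A M i = ∑ x : {x : Fin K // x ≠ I},
      M x * c x.1 * ((A x.1 / (A I + A x.1)) ^ 2 * B I + (A I / (A I + A x.1)) ^ 2 * B x.1) := by
  rw [sum_split I, hf_I, Finset.mul_sum, ← Finset.sum_add_distrib]
  refine Finset.sum_congr rfl fun x _ => ?_
  rw [hf_x]; ring

lemma hf_tendsto {α : Type*} {l : Filter α} {Ak : α → Fin K → ℝ}
    {Mk : α → {x : Fin K // x ≠ I} → ℝ} {A : Fin K → ℝ} {M : {x : Fin K // x ≠ I} → ℝ}
    (hA : ∀ i, Tendsto (fun k => Ak k i) l (nhds (A i)))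
    (hM : ∀ i, Tendsto (fun k => Mk k i) l (nhds (M i)))
    (hpos : ∀ x, 0 < A I + A x) (i : Fin K) :
    Tendsto (fun k => hf c I (Ak k) (Mk k) i) l (nhds (hf c I A M i)) := by
  by_cases h : i = I
  · subst h
    simp only [hf_I]
    exact tendsto_finsetSum _ fun x _ => ((hM x).mul_const _).mul
      (((hA x).div ((hA i).add (hA x)) (hpos x).ne').pow 2)
  · simp only [hf_x _ _ (⟨i, h⟩ : {x : Fin K // x ≠ I})]
    exact ((hM _).mul_const _).mul (((hA I).div ((hA I).add (hA i)) (hpos i).ne').pow 2)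

lemma gf_tendsto {α : Type*} {l : Filter α} {Ak : α → Fin K → ℝ} {A : Fin K → ℝ}
    (hA : ∀ i, Tendsto (fun k => Ak k i) l (nhds (A i)))
    (hpos : ∀ x, 0 < A I + A x) (i : Fin K) :
    Tendsto (fun k => gf c I (Ak k) i) l (nhds (gf c I A i)) :=
  (((hA I).mul (hA i)).div ((hA I).add (hA i)) (hpos i).ne').const_mul _

lemma hf_scale (A : Fin K → ℝ) (M : {x : Fin K // x ≠ I} → ℝ) {l : ℝ} (hl : 0 < l) (i : Fin K) :
    hf c I (fun j => l * A j) (fun j => l * M j) i = l * hf c I A M i := by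
  have key : ∀ a b d : ℝ, (l * a) / (l * b + l * d) = a / (b + d) := by
    intro a b d
    rw [← mul_add, mul_div_mul_left _ _ hl.ne']
  unfold hf
  simp only [key]
  split_ifs with h
  · rw [Finset.mul_sum]; exact Finset.sum_congr rfl fun x _ => by ring
  · ring

lemma gf_scale (A : Fin K → ℝ) {l : ℝ} (hl : 0 < l) (i : Fin K) :
    gf c I (fun j => l * A j) i = l * gf c I A i := by
  unfold gf
  have : l * A I * (l * A i) / (l * A I + l * A i) = l * (A I * A i / (A I + A i)) := by
    rw [← mul_add, show l * A I * (l * A i) = l * (l * (A I * A i)) by ring,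
      mul_div_mul_left _ _ hl.ne', mul_div_assoc]
  rw [this]; ring

lemma gf_le (A : Fin K → ℝ) (hc : ∀ x, 0 ≤ c x) (B : Fin K → ℝ) (x : Fin K)
    (hA : 0 < A I + A x) (hB : 0 < B I + B x) :
    gf c I B x ≤ c x * ((A x / (A I + A x)) ^ 2 * B I + (A I / (A I + A x)) ^ 2 * B x) := by
  refine mul_le_mul_of_nonneg_left ?_ (hc x)
  rw [div_le_iff₀ hB]
  have : A I / (A I + A x) = 1 - A x / (A I + A x) := by field_simp; ring
  rw [this]
  set r := A x / (A I + A x)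
  nlinarith [sq_nonneg (r * B I - (1 - r) * B x)]

lemma gf_eq (A : Fin K → ℝ) (x : Fin K) (hA : 0 < A I + A x) :
    gf c I A x = c x * ((A x / (A I + A x)) ^ 2 * A I + (A I / (A I + A x)) ^ 2 * A x) := by
  unfold gf
  field_simp
  ring

end explicit

/-- The coefficients. -/
def cg {K : ℕ} (θ : Fin K → ℝ) (σ : ℝ) (I : Fin K) (x : Fin K) : ℝ :=
  (θ I - θ x) ^ 2 / (2 * σ ^ 2)

section model
variable {K : ℕ} {θ : Fin K → ℝ} {σ : ℝ} {I : Fin K}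

lemma Dg_eq {p : Fin K → ℝ} {x : Fin K} (h : 0 < p I + p x) :
    Dg θ σ I p x = gf (cg θ σ I) I p x := by
  simp [Dg, gf, cg, h]

lemma grad_eq {p : Fin K → ℝ} (hp : ∀ i, 0 < p i) (μ : {x : Fin K // x ≠ I} → ℝ) :
    gradFg θ σ I p μ = hf (cg θ σ I) I p μ := by
  have h1 : ∀ x : {x : Fin K // x ≠ I}, HasFDerivAt (fun p' : Fin K → ℝ => Dg θ σ I p' x.1)
      (cg θ σ I x.1 • ((p x.1 / (p I + p x.1)) ^ 2 • ContinuousLinearMap.proj (R := ℝ) I +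
        (p I / (p I + p x.1)) ^ 2 • ContinuousLinearMap.proj (R := ℝ) x.1) :
        (Fin K → ℝ) →L[ℝ] ℝ) p := by
    intro x
    have hs : 0 < p I + p x.1 := add_pos (hp _) (hp _)
    have e1 : HasFDerivAt (fun p' : Fin K → ℝ => p' I)
      (ContinuousLinearMap.proj (R := ℝ) I : (Fin K → ℝ) →L[ℝ] ℝ) p := hasFDerivAt_apply I p
    have e2 : HasFDerivAt (fun p' : Fin K → ℝ => p' x.1)
      (ContinuousLinearMap.proj (R := ℝ) x.1 : (Fin K → ℝ) →L[ℝ] ℝ) p := hasFDerivAt_apply x.1 p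
    have e5 : HasFDerivAt (fun p' : Fin K → ℝ => (p' I + p' x.1)⁻¹) _ p :=
      (hasDerivAt_inv hs.ne').comp_hasFDerivAt p (e1.fun_add e2)
    have e3 := ((e1.fun_mul e2).fun_mul e5).const_mul (cg θ σ I x.1)
    have e4 : (fun p' : Fin K → ℝ => Dg θ σ I p' x.1) =ᶠ[nhds p]
        fun p' => cg θ σ I x.1 * (p' I * p' x.1 * (p' I + p' x.1)⁻¹) := by
      have : ∀ᶠ p' : Fin K → ℝ in nhds p, 0 < p' I + p' x.1 := by
        have hc : ContinuousAt (fun p' : Fin K → ℝ => p' I + p' x.1) p := by fun_prop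
        exact hc.eventually (lt_mem_nhds hs)
      filter_upwards [this] with p' hp' using Dg_eq hp'
    refine (e3.congr_of_eventuallyEq e4).congr_fderiv ?_
    ext v
    simp
    field_simp
    ring
  have h2 : HasFDerivAt (fun p' => Fg θ σ I p' μ) _ p :=
    HasFDerivAt.fun_sum (u := Finset.univ) fun x _ => (h1 x).const_mul (μ x)
  funext i
  rw [gradFg, h2.fderiv]
  by_cases h : i = I
  · subst h
    rw [hf_I]
    simp only [_root_.sum_apply]
    refine Finset.sum_congr rfl fun x _ => ?_
    simp [x.2]
    ring
  · have h3 := hf_x (c := cg θ σ I) p μ ⟨i, h⟩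
    simp only at h3
    rw [h3]
    simp only [_root_.sum_apply]
    rw [Finset.sum_eq_single ⟨i, h⟩]
    · simp [Ne.symm h]
      ring
    · intro x _ hx
      have : x.1 ≠ i := fun e => hx (Subtype.ext e)
      simp [this, Ne.symm h]
    · simp

lemma Cg_smooth {p : Fin K → ℝ} (hp0 : ∀ i, 0 ≤ p i) (hpI : 0 < p I)
    {μ : {x : Fin K // x ≠ I} → ℝ} {f : Fin K → ℝ} (hf' : f ∈ Cg θ σ I p μ) :
    f = hf (cg θ σ I) I p μ := by
  have : Cg θ σ I p μ ⊆ {hf (cg θ σ I) I p μ} := by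
    refine convexHull_min ?_ (convex_singleton _)
    rintro f ⟨pn, h1, h2, h3⟩
    refine tendsto_nhds_unique h3 ?_
    rw [tendsto_pi_nhds] at h2 ⊢
    intro i
    simp only [fun n => grad_eq (θ := θ) (σ := σ) (I := I) (h1 n).2 μ]
    exact hf_tendsto (c := cg θ σ I) (Mk := fun _ => μ) (M := μ) h2 (fun _ => tendsto_const_nhds)
      (fun x => add_pos_of_pos_of_nonneg hpI (hp0 x)) i
  exact this hf'

lemma base_zero {q f : Fin K → ℝ} (hq : q ∈ stdSimplex ℝ (Fin K))
    (hm : ∀ q' ∈ stdSimplex ℝ (Fin K), ∑ i, q' i * f i ≤ ∑ i, q i * f i)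
    {i j : Fin K} (hij : f i < f j) : q i = 0 := by
  have : Nonempty (Fin K) := ⟨i⟩
  obtain ⟨j0, hj0⟩ := Finite.exists_max f
  have h1 := hm (Pi.single j0 1) (single_mem_stdSimplex ℝ j0)
  have h2 : ∑ i, (Pi.single j0 1 : Fin K → ℝ) i * f i = f j0 := by
    rw [Finset.sum_eq_single j0] <;> simp +contextual
  have h3 : ∑ l, q l * (f j0 - f l) ≤ 0 := by
    simp only [mul_sub, Finset.sum_sub_distrib, ← Finset.sum_mul, hq.2]
    linarith
  have h4 : ∀ l ∈ Finset.univ, 0 ≤ q l * (f j0 - f l) := fun l _ =>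
    mul_nonneg (hq.1 l) (by linarith [hj0 l])
  have h5 := Finset.single_le_sum h4 (Finset.mem_univ i)
  have h6 : 0 < f j0 - f i := by linarith [hj0 j]
  have h7 := hq.1 i
  by_contra hne
  have : 0 < q i := lt_of_le_of_ne h7 (Ne.symm hne)
  have := mul_pos this h6
  linarith

lemma LMO_zero {p q : Fin K → ℝ} {μ : {x : Fin K // x ≠ I} → ℝ} {i : Fin K}
    (hq : q ∈ LMOpg θ σ I p μ) (h : ∀ f ∈ Cg θ σ I p μ, ∃ j, f i < f j) : q i = 0 := by
  have : LMOpg θ σ I p μ ⊆ {q | q i = 0} := by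
    refine convexHull_min ?_ ?_
    · rintro q ⟨h1, f, h2, h3⟩
      obtain ⟨j, hj⟩ := h f h2
      exact base_zero h1 h3 hj
    · intro a ha b hb s t _ _ _
      simp only [Set.mem_ofPred_eq] at ha hb ⊢
      simp [ha, hb]
  exact this hq

lemma LMO_simplex {p q : Fin K → ℝ} {μ : {x : Fin K // x ≠ I} → ℝ}
    (hq : q ∈ LMOpg θ σ I p μ) : q ∈ stdSimplex ℝ (Fin K) :=
  convexHull_min (fun _ h => h.1) (convex_stdSimplex ℝ _) hq

lemma LMO_active {p q : Fin K → ℝ} {μ : {x : Fin K // x ≠ I} → ℝ} {i : Fin K}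
    (hp0 : ∀ i, 0 ≤ p i) (hpI : 0 < p I)
    (hq : q ∈ LMOpg θ σ I p μ) (hi : 0 < q i) (j : Fin K) :
    hf (cg θ σ I) I p μ j ≤ hf (cg θ σ I) I p μ i := by
  by_contra hcon
  push Not at hcon
  have := LMO_zero (i := i) hq fun f hf' => ⟨j, by rw [Cg_smooth hp0 hpI hf']; exact hcon⟩
  linarith

lemma LMOmu_active {p : Fin K → ℝ} {ν : {x : Fin K // x ≠ I} → ℝ} {x : {x : Fin K // x ≠ I}}
    (hν : ν ∈ LMOmug θ σ I p) (hx : 0 < ν x) (y : {x : Fin K // x ≠ I}) :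
    Dg θ σ I p x.1 ≤ Dg θ σ I p y.1 := by
  have hle : ∀ z : {x : Fin K // x ≠ I}, (⨅ x' : {x : Fin K // x ≠ I}, Dg θ σ I p x'.1) ≤
      Dg θ σ I p z.1 := fun z =>
    ciInf_le (f := fun x' : {x : Fin K // x ≠ I} => Dg θ σ I p x'.1) (Set.finite_range _).bddBelow z
  set m := ⨅ x' : {x : Fin K // x ≠ I}, Dg θ σ I p x'.1
  have h3 : ∑ l, ν l * (Dg θ σ I p l.1 - m) = 0 := by
    simp only [mul_sub, Finset.sum_sub_distrib, ← Finset.sum_mul, hν.1.2]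
    rw [hν.2]; simp [m]
  have h4 := (Finset.sum_eq_zero_iff_of_nonneg (fun l _ =>
    mul_nonneg (hν.1.1 l) (by linarith [hle l]))).1 h3 x (Finset.mem_univ x)
  have h5 := (mul_eq_zero.1 h4).resolve_left hx.ne'
  linarith [hle y]

lemma LMO_lower {p q : Fin K → ℝ} {μ : {x : Fin K // x ≠ I} → ℝ} {x : {x : Fin K // x ≠ I}}
    {c0 c1 C : ℝ} (hc0 : 0 < c0) (hc : ∀ x : {x : Fin K // x ≠ I}, c0 ≤ cg θ σ I x.1)
    (hc1 : ∀ x : {x : Fin K // x ≠ I}, cg θ σ I x.1 ≤ c1) (hC0 : 0 ≤ C)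
    (hC : (K : ℝ) * (c1 / (1 + C) ^ 2) < c0 / 2)
    (hμ : μ ∈ stdSimplex ℝ {x : Fin K // x ≠ I})
    (hq : q ∈ LMOpg θ σ I p μ) (hpx : C * p I < p x.1) : q x.1 = 0 := by
  refine LMO_zero hq ?_
  have hsub : Cg θ σ I p μ ⊆ {f | c0 / 2 ≤ ∑ i, f i ∧ f x.1 ≤ c1 / (1 + C) ^ 2} := by
    refine convexHull_min ?_ ?_
    · rintro f ⟨pn, h1, h2, h3⟩
      rw [tendsto_pi_nhds] at h2 h3
      simp only [fun n => grad_eq (θ := θ) (σ := σ) (I := I) (h1 n).2 μ] at h3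
      constructor
      · refine ge_of_tendsto' (tendsto_finsetSum Finset.univ fun i _ => h3 i) fun n => ?_
        have e := hf_sum (c := cg θ σ I) (pn n) (fun _ => 1) μ
        simp only [one_mul, mul_one] at e
        rw [e]
        calc c0 / 2 = ∑ x, μ x * (c0 / 2) := by rw [← Finset.sum_mul, hμ.2, one_mul]
          _ ≤ _ := by
            refine Finset.sum_le_sum fun y _ => ?_
            rw [mul_assoc]
            refine mul_le_mul_of_nonneg_left ?_ (hμ.1 y)
            have hs : 0 < pn n I + pn n y.1 := add_pos ((h1 n).2 _) ((h1 n).2 _)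
            have : pn n I / (pn n I + pn n y.1) = 1 - pn n y.1 / (pn n I + pn n y.1) := by
              field_simp; ring
            rw [this]
            set r := pn n y.1 / (pn n I + pn n y.1)
            have h7 : 1 / 2 ≤ r ^ 2 + (1 - r) ^ 2 := by nlinarith [sq_nonneg (2 * r - 1)]
            have h8 := hc y
            nlinarith
      · have hev : ∀ᶠ n in atTop, C * pn n I < pn n x.1 :=
          ((h2 I).const_mul C).eventually_lt (h2 x.1) hpx
        refine le_of_tendsto (h3 x.1) ?_
        filter_upwards [hev] with n hn
        rw [hf_x]
        have hI := (h1 n).2 I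
        have hx := (h1 n).2 x.1
        have e1 : pn n I / (pn n I + pn n x.1) ≤ 1 / (1 + C) := by
          rw [div_le_div_iff₀ (by linarith) (by linarith)]
          nlinarith
        have e2 : (pn n I / (pn n I + pn n x.1)) ^ 2 ≤ (1 / (1 + C)) ^ 2 :=
          pow_le_pow_left₀ (by positivity) e1 2
        have e3 : μ x ≤ 1 := by
          rw [← hμ.2]; exact Finset.single_le_sum (fun j _ => hμ.1 j) (Finset.mem_univ x)
        have e4 : μ x * cg θ σ I x.1 ≤ 1 * c1 :=
          mul_le_mul e3 (hc1 x) (hc0.le.trans (hc x)) zero_le_one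
        have e5 : 0 ≤ c1 := (hc0.le.trans (hc x)).trans (hc1 x)
        calc _ ≤ (1 * c1) * (1 / (1 + C)) ^ 2 := mul_le_mul e4 e2 (by positivity) (by linarith)
          _ = _ := by rw [one_mul, div_pow, one_pow, mul_one_div]
    · intro f hf' g hg s t hs ht hst
      simp only [Set.mem_ofPred_eq, Pi.add_apply, Pi.smul_apply, smul_eq_mul,
        Finset.sum_add_distrib, ← Finset.mul_sum] at hf' hg ⊢
      constructor
      · nlinarith [mul_le_mul_of_nonneg_left hf'.1 hs, mul_le_mul_of_nonneg_left hg.1 ht]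
      · generalize c1 / (1 + C) ^ 2 = d at hf' hg ⊢
        have e : d = s * d + t * d := by rw [← add_mul, hst, one_mul]
        linarith [mul_le_mul_of_nonneg_left hf'.2 hs, mul_le_mul_of_nonneg_left hg.2 ht]
  intro f hf'
  obtain ⟨h1, h2⟩ := hsub hf'
  by_contra hcon
  push Not at hcon
  have : ∑ i, f i ≤ ∑ i : Fin K, c1 / (1 + C) ^ 2 :=
    Finset.sum_le_sum fun i _ => (hcon i).trans h2
  simp only [Finset.sum_const, Finset.card_univ, Fintype.card_fin, nsmul_eq_mul] at this
  linarith

end model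

lemma LipI.div {f g : ℝ → ℝ} {ε d : ℝ} (hd : 0 < d) (hf : LipI f ε) (hg : LipI g ε)
    (hgd : ∀ t ∈ Set.Icc ε 1, d ≤ g t) : LipI (fun t => f t / g t) ε := by
  simp only [div_eq_mul_inv]
  exact hf.mul (hg.inv hd hgd)

lemma hder_x {a b M a' b' M' c r r' w w' g' : ℝ} (hs : 0 < a + b) (hM : 0 ≤ M) (hc : 0 ≤ c)
    (hr : r = b / (a + b)) (hw : w = a / (a + b))
    (hr' : r' = (b' * (a + b) - b * (a' + b')) / (a + b) ^ 2)
    (hw' : w' = (a' * (a + b) - a * (a' + b')) / (a + b) ^ 2)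
    (hg' : g' = c * (((a' * b + a * b') * (a + b) - a * b * (a' + b')) / (a + b) ^ 2)) :
    a' * (M' * c * r ^ 2 + M * c * (2 * r * r')) + b' * (M' * c * w ^ 2 + M * c * (2 * w * w'))
      ≤ M' * g' := by
  have key : M' * g' - (a' * (M' * c * r ^ 2 + M * c * (2 * r * r')) +
      b' * (M' * c * w ^ 2 + M * c * (2 * w * w'))) =
      2 * M * c * (b * a' - a * b') ^ 2 / (a + b) ^ 3 := by
    subst hr hw hr' hw' hg'
    field_simp
    ring
  have : 0 ≤ 2 * M * c * (b * a' - a * b') ^ 2 / (a + b) ^ 3 := by positivity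
  linarith

/-- Limit curves: the gap vanishes at time one. -/
lemma core1 {K : ℕ} {c : Fin K → ℝ} {I : Fin K} (hX : Nonempty {x : Fin K // x ≠ I})
    {A : Fin K → ℝ → ℝ} {M : {x : Fin K // x ≠ I} → ℝ → ℝ} {c1 d : ℝ} (hd : 0 < d)
    (hc : ∀ x, 0 ≤ c x) (hc1 : ∀ x, c x ≤ c1)
    (hA : ∀ i ε, 0 < ε → LipI (A i) ε) (hM : ∀ i ε, 0 < ε → LipI (M i) ε)
    (hA0 : ∀ i t, 0 ≤ t → 0 ≤ A i t) (hM0 : ∀ i t, 0 ≤ t → 0 ≤ M i t)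
    (hAsum : ∀ t, 0 ≤ t → ∑ i, A i t = t) (hMsum : ∀ t, 0 ≤ t → ∑ i, M i t = t)
    (hlow : ∀ t, 0 ≤ t → d * t ≤ A I t)
    (hAch : ∀ i s r, 0 < s → s < r → r ≤ 1 → A i s ≠ A i r →
      ∃ τ ∈ Set.Icc s r, ∀ j, hf c I (fun l => A l τ) (fun l => M l τ) j ≤
        hf c I (fun l => A l τ) (fun l => M l τ) i)
    (hMch : ∀ i s r, 0 < s → s < r → r ≤ 1 → M i s ≠ M i r →
      ∃ τ ∈ Set.Icc s r, ∀ j : {x : Fin K // x ≠ I}, gf c I (fun l => A l τ) i.1 ≤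
        gf c I (fun l => A l τ) j.1) (i : Fin K) (x : {x : Fin K // x ≠ I}) :
    hf c I (fun l => A l 1) (fun l => M l 1) i ≤ gf c I (fun l => A l 1) x.1 := by
  have : Nonempty (Fin K) := ⟨I⟩
  have hsum : ∀ t, 0 < t → ∀ x, 0 < A I t + A x t := fun t ht x => by
    have := hlow t ht.le
    have := hA0 x t ht.le
    nlinarith [mul_pos hd ht]
  have hdl : ∀ ε, 0 < ε → ∀ x, ∀ t ∈ Set.Icc ε 1, d * ε ≤ A I t + A x t := fun ε hε x t ht => by
    have := hlow t (hε.le.trans ht.1)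
    have := hA0 x t (hε.le.trans ht.1)
    nlinarith [mul_le_mul_of_nonneg_left ht.1 hd.le]
  refine core0 (u := A) (v := M) (h := fun i t => hf c I (fun l => A l t) (fun l => M l t) i)
    (g := fun x t => gf c I (fun l => A l t) x.1) (C := c1) hA hM ?_ ?_
    (fun t ht => hAsum t ht.1.le) (fun t ht => hMsum t ht.1.le) hAch hMch ?_ ?_ ?_ i x
  · intro i ε hε
    by_cases h : i = I
    · subst h
      simp only [hf_I, pow_two]
      refine LipI.sum _ fun x => ?_
      have hr := LipI.div (mul_pos hd hε) (hA x.1 ε hε) ((hA i ε hε).add (hA x.1 ε hε))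
        (hdl ε hε x.1)
      exact ((hM x ε hε).mul (LipI.const _ _)).mul (hr.mul hr)
    · simp only [hf_x _ _ (⟨i, h⟩ : {x : Fin K // x ≠ I}), pow_two]
      have hr := LipI.div (mul_pos hd hε) (hA I ε hε) ((hA I ε hε).add (hA i ε hε))
        (hdl ε hε i)
      exact ((hM _ ε hε).mul (LipI.const _ _)).mul (hr.mul hr)
  · intro x ε hε
    exact (LipI.const _ _).mul (LipI.div (mul_pos hd hε) ((hA I ε hε).mul (hA x.1 ε hε))
      ((hA I ε hε).add (hA x.1 ε hε)) (hdl ε hε x.1))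
  · intro t ht u' v' hu' hv'
    have hs := hsum t ht.1
    have dr : ∀ x, HasDerivAt (fun t => A x t / (A I t + A x t))
        ((u' x * (A I t + A x t) - A x t * (u' I + u' x)) / (A I t + A x t) ^ 2) t :=
      fun x => (hu' x).fun_div ((hu' I).fun_add (hu' x)) (hs x).ne'
    have dw : ∀ x, HasDerivAt (fun t => A I t / (A I t + A x t))
        ((u' I * (A I t + A x t) - A I t * (u' I + u' x)) / (A I t + A x t) ^ 2) t :=
      fun x => (hu' I).fun_div ((hu' I).fun_add (hu' x)) (hs x).ne'
    have dg : ∀ x, HasDerivAt (fun t => gf c I (fun l => A l t) x)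
        (c x * (((u' I * A x t + A I t * u' x) * (A I t + A x t) -
          A I t * A x t * (u' I + u' x)) / (A I t + A x t) ^ 2)) t :=
      fun x => (((hu' I).fun_mul (hu' x)).fun_div ((hu' I).fun_add (hu' x)) (hs x).ne').const_mul _
    set r := fun x => A x t / (A I t + A x t) with hr
    set w := fun x => A I t / (A I t + A x t) with hw
    set r' := fun x => (u' x * (A I t + A x t) - A x t * (u' I + u' x)) / (A I t + A x t) ^ 2
      with hr'
    set w' := fun x => (u' I * (A I t + A x t) - A I t * (u' I + u' x)) / (A I t + A x t) ^ 2
      with hw'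
    refine ⟨fun i => if h : i = I then ∑ x : {x : Fin K // x ≠ I},
        (v' x * c x.1 * r x.1 ^ 2 + M x t * c x.1 * (2 * r x.1 * r' x.1))
        else v' ⟨i, h⟩ * c i * w i ^ 2 + M ⟨i, h⟩ t * c i * (2 * w i * w' i), _,
        fun i => ?_, fun x => dg x.1, ?_⟩
    · by_cases h : i = I
      · subst h
        simp only [hf_I, dif_pos]
        refine HasDerivAt.fun_sum fun x _ => ?_
        refine (((hv' x).mul_const (c x.1)).fun_mul ((dr x.1).fun_pow 2)).congr_deriv ?_
        simp [hr, hr']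
      · simp only [hf_x _ _ (⟨i, h⟩ : {x : Fin K // x ≠ I}), dif_neg h]
        refine (((hv' ⟨i, h⟩).mul_const (c i)).fun_mul ((dw i).fun_pow 2)).congr_deriv ?_
        simp [hw, hw']
    · rw [sum_split I]
      beta_reduce
      rw [dif_pos rfl, Finset.mul_sum, ← Finset.sum_add_distrib]
      refine Finset.sum_le_sum fun x _ => ?_
      rw [dif_neg x.2]
      exact hder_x (hs x.1) (hM0 x t ht.1.le) (hc x.1) rfl rfl rfl rfl rfl
  · intro i t ht
    have hM0' := fun x => hM0 x t ht.1.le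
    have hA0' := fun x => hA0 x t ht.1.le
    have hs := hsum t ht.1
    have hle1 : ∀ x, A x t / (A I t + A x t) ≤ 1 := fun x => by
      rw [div_le_one (hs x)]; linarith [hA0' I]
    have hle2 : ∀ x, A I t / (A I t + A x t) ≤ 1 := fun x => by
      rw [div_le_one (hs x)]; linarith [hA0' x]
    have hb : ∀ (x : {x : Fin K // x ≠ I}) (z : ℝ), 0 ≤ z → z ≤ 1 →
        M x t * c x.1 * z ^ 2 ≤ c1 * M x t := fun x z h0 h1 => by
      have : z ^ 2 ≤ 1 := pow_le_one₀ h0 h1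
      have h2 := mul_nonneg (hM0' x) (hc x.1)
      have h3 := mul_le_mul_of_nonneg_left (hc1 x.1) (hM0' x)
      nlinarith
    have hc10 : 0 ≤ c1 := (hc I).trans (hc1 I)
    by_cases h : i = I
    · subst h
      simp only [hf_I]
      rw [← hMsum t ht.1.le, Finset.mul_sum, hMsum t ht.1.le]
      exact Finset.sum_le_sum fun x _ => hb x _ (div_nonneg (hA0' _) (hs _).le) (hle1 _)
    · simp only [hf_x _ _ (⟨i, h⟩ : {x : Fin K // x ≠ I})]
      refine (hb ⟨i, h⟩ _ (div_nonneg (hA0' _) (hs _).le) (hle2 _)).trans ?_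
      have : M ⟨i, h⟩ t ≤ t := by
        conv_rhs => rw [← hMsum t ht.1.le]
        exact Finset.single_le_sum (fun j _ => hM0' j) (Finset.mem_univ _)
      exact mul_le_mul_of_nonneg_left this hc10
  · intro x t ht
    exact mul_nonneg (hc _) (div_nonneg (mul_nonneg (hA0 _ _ ht.1.le) (hA0 _ _ ht.1.le))
      (hsum t ht.1 _).le)

lemma cum_avg {ι : Type*} {p q : ℕ → ι → ℝ}
    (hup : ∀ n, p (n + 1) = p n + (1 / ((n : ℝ) + 1)) • (q n - p n)) (n : ℕ) (i : ι) :
    (n : ℝ) * p n i = ∑ l ∈ Finset.range n, q l i := by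
  induction n with
  | zero => simp
  | succ n ih =>
    rw [Finset.sum_range_succ, ← ih, hup n]
    simp only [Pi.add_apply, Pi.smul_apply, Pi.sub_apply, smul_eq_mul]
    have : (n : ℝ) + 1 ≠ 0 := by positivity
    push_cast
    field_simp
    ring

lemma avg_simplex {ι : Type*} [Fintype ι] {p q : ℕ → ι → ℝ}
    (hup : ∀ n, p (n + 1) = p n + (1 / ((n : ℝ) + 1)) • (q n - p n))
    (hp0 : p 0 ∈ stdSimplex ℝ ι) (hq : ∀ n, q n ∈ stdSimplex ℝ ι) (n : ℕ) :
    p n ∈ stdSimplex ℝ ι := by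
  induction n with
  | zero => exact hp0
  | succ n ih =>
    rw [hup n]
    have h0 : (0:ℝ) < (n:ℝ) + 1 := by positivity
    exact (convex_stdSimplex ℝ ι).add_smul_sub_mem ih (hq n)
      ⟨by positivity, by rw [div_le_one h0]; linarith [(Nat.cast_nonneg n : (0:ℝ) ≤ n)]⟩

/-- convergence of the game value for discrete Frank–Wolfe self-play in
Gaussian BAI. Any sequence of iterates following the one-hot Frank–Wolfe updates with
step sizes `1/(n+1)` and selections from `LMO_p` and `LMO_μ` satisfies
`F(p_n, μ_n) → F* = max_{p∈Δ_K} min_{x∈X} D(p,x)`. -/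
theorem stmt_14 {K : ℕ} (hK : 1 < K) (θ : Fin K → ℝ) (Istar : Fin K)
    (hmax : ∀ j ≠ Istar, θ j < θ Istar) (σ : ℝ) (hσ : 0 < σ)
    (p : ℕ → (Fin K → ℝ)) (μ : ℕ → ({x : Fin K // x ≠ Istar} → ℝ))
    (q : ℕ → (Fin K → ℝ)) (ν : ℕ → ({x : Fin K // x ≠ Istar} → ℝ))
    (hp0 : p 0 ∈ stdSimplex ℝ (Fin K))
    (hμ0 : μ 0 ∈ stdSimplex ℝ {x : Fin K // x ≠ Istar})
    (hq : ∀ n, q n ∈ LMOpg θ σ Istar (p n) (μ n))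
    (hν : ∀ n, ν n ∈ LMOmug θ σ Istar (p n))
    (hup : ∀ n, p (n + 1) = p n + (1 / ((n : ℝ) + 1)) • (q n - p n))
    (hum : ∀ n, μ (n + 1) = μ n + (1 / ((n : ℝ) + 1)) • (ν n - μ n)) :
    Tendsto (fun n => Fg θ σ Istar (p n) (μ n)) atTop
      (nhds (⨆ pp : stdSimplex ℝ (Fin K),
        ⨅ x : {x : Fin K // x ≠ Istar}, Dg θ σ Istar pp.1 x.1)) := by
  have hXne : Nonempty {x : Fin K // x ≠ Istar} := by
    have : Nontrivial (Fin K) := Fin.nontrivial_iff_two_le.2 hK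
    obtain ⟨y, hy⟩ := exists_ne Istar
    exact ⟨⟨y, hy⟩⟩
  have hFne : Nonempty (Fin K) := ⟨Istar⟩
  have hKpos : (0:ℝ) < K := by exact_mod_cast (by omega : 0 < K)
  set c := cg θ σ Istar with hcdef
  have hcnn : ∀ x, 0 ≤ c x := fun x => by simp only [hcdef, cg]; positivity
  have hcpos : ∀ x : {x : Fin K // x ≠ Istar}, 0 < c x.1 := fun x => by
    have := sub_pos.2 (hmax x.1 x.2)
    simp only [hcdef, cg]; positivity
  obtain ⟨x0, hx0⟩ := Finite.exists_min (fun x : {x : Fin K // x ≠ Istar} => c x.1)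
  obtain ⟨x1, hx1⟩ := Finite.exists_max c
  set c0 := c x0.1 with hc0def
  set c1 := c x1 with hc1def
  have hc0 : 0 < c0 := hcpos x0
  have hc1 : 0 < c1 := hc0.trans_le (hx1 _)
  obtain ⟨C, hC0, hC⟩ : ∃ C : ℝ, 0 ≤ C ∧ (K : ℝ) * (c1 / (1 + C) ^ 2) < c0 / 2 := by
    refine ⟨2 * K * c1 / c0, by positivity, ?_⟩
    set C := 2 * K * c1 / c0 with hCdef
    have h0 : 0 ≤ C := by positivity
    have h1 : C * c0 = 2 * K * c1 := by rw [hCdef]; field_simp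
    rw [← mul_div_assoc, div_lt_iff₀ (by positivity)]
    nlinarith [mul_nonneg h0 hc0.le, mul_nonneg (mul_nonneg h0 h0) hc0.le]
  have hqs : ∀ n, q n ∈ stdSimplex ℝ (Fin K) := fun n => LMO_simplex (hq n)
  have hνs : ∀ n, ν n ∈ stdSimplex ℝ {x : Fin K // x ≠ Istar} := fun n => (hν n).1
  have hps := avg_simplex hup hp0 hqs
  have hμs := avg_simplex hum hμ0 hνs
  have hSp := cum_avg hup
  have hSm := cum_avg hum
  have hlowS : ∀ n, ∀ x : {x : Fin K // x ≠ Istar}, ∑ l ∈ Finset.range n, q l x.1 ≤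
      C * ∑ l ∈ Finset.range n, q l Istar + 1 := by
    intro n x
    induction n with
    | zero => simp
    | succ n ih =>
      rw [Finset.sum_range_succ, Finset.sum_range_succ]
      have hI := mul_nonneg hC0 ((hqs n).1 Istar)
      by_cases h : C * p n Istar < p n x.1
      · rw [LMO_lower hc0 hx0 (fun x => hx1 x.1) hC0 hC (hμs n) (hq n) h]
        nlinarith
      · push Not at h
        have h1 := mul_le_mul_of_nonneg_left h (Nat.cast_nonneg (α := ℝ) n)
        rw [hSp, mul_left_comm, hSp] at h1
        have h2 : q n x.1 ≤ 1 := by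
          rw [← (hqs n).2]
          exact Finset.single_le_sum (fun j _ => (hqs n).1 j) (Finset.mem_univ x.1)
        nlinarith
  have hlowI : ∀ n : ℕ, (n:ℝ) ≤ K * ((C + 1) * ∑ l ∈ Finset.range n, q l Istar + 1) := by
    intro n
    have h0 : 0 ≤ ∑ l ∈ Finset.range n, q l Istar := Finset.sum_nonneg fun l _ => (hqs l).1 _
    calc (n:ℝ) = ∑ i, ∑ l ∈ Finset.range n, q l i := by
          rw [Finset.sum_comm]; simp [(hqs _).2]
      _ ≤ ∑ i : Fin K, ((C + 1) * ∑ l ∈ Finset.range n, q l Istar + 1) := by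
          refine Finset.sum_le_sum fun i _ => ?_
          by_cases h : i = Istar
          · rw [h]; nlinarith [mul_nonneg hC0 h0]
          · have := hlowS n ⟨i, h⟩
            simp only at this
            linarith
      _ = _ := by
        rw [Finset.sum_const, Finset.card_univ, Fintype.card_fin, nsmul_eq_mul]
  have hpI : ∀ n : ℕ, K < n → 0 < p n Istar := by
    intro n hn
    have hn' : (K:ℝ) < n := by exact_mod_cast hn
    have h1 := hlowI n
    rw [← hSp] at h1
    by_contra hcon
    push Not at hcon
    have h2 : (C + 1) * ((n:ℝ) * p n Istar) ≤ 0 :=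
      mul_nonpos_of_nonneg_of_nonpos (by linarith)
        (mul_nonpos_of_nonneg_of_nonpos (by positivity) hcon)
    nlinarith
  rw [tendsto_iff_ultrafilter]
  intro U hU
  obtain ⟨A, hA⟩ := ulim hqs hU
  obtain ⟨M, hM⟩ := ulim hνs hU
  have hpos : ∀ᶠ k : ℕ in (U : Filter ℕ), 0 < (k:ℝ) :=
    hU ((eventually_gt_atTop 0).mono fun k hk => by exact_mod_cast hk)
  have hkinf : Tendsto (fun k : ℕ => (k:ℝ)) U atTop := tendsto_natCast_atTop_atTop.mono_left hU
  have hbig : ∀ (τ : ℝ), 0 < τ → ∀ N : ℕ → ℕ, Tendsto (fun k => (N k : ℝ) / (k:ℝ)) U (nhds τ) →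
      ∀ᶠ k in (U : Filter ℕ), K < N k := by
    intro τ hτ N hN
    have h1 : Tendsto (fun k => (N k : ℝ) / (k:ℝ) * (k:ℝ)) U atTop := hN.pos_mul_atTop hτ hkinf
    filter_upwards [h1.eventually_gt_atTop (K:ℝ), hpos] with k hk hk0
    rw [div_mul_cancel₀ _ hk0.ne'] at hk
    exact_mod_cast hk
  set d : ℝ := 1 / (K * (C + 1)) with hddef
  have hd : 0 < d := by positivity
  have hlow : ∀ t, 0 ≤ t → d * t ≤ A Istar t := by
    intro t ht
    have l1 := floor_lim hU ht
    have l2 := (l1.const_mul d).sub ((tendsto_inv_atTop_zero.comp hkinf).const_mul (1 / (C + 1)))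
    rw [mul_zero, sub_zero] at l2
    refine le_of_tendsto_of_tendsto l2 (hA t ht _ l1 Istar) ?_
    filter_upwards [hpos] with k hk
    have h1 := hlowI ⌊t * (k:ℝ)⌋₊
    set S := ∑ l ∈ Finset.range ⌊t * (k:ℝ)⌋₊, q l Istar
    simp only [Function.comp]
    rw [hddef, le_div_iff₀ hk]
    have h2 : (1 / (↑K * (C + 1)) * (↑⌊t * (k:ℝ)⌋₊ / (k:ℝ)) - 1 / (C + 1) * (k:ℝ)⁻¹) * k =
        (↑⌊t * (k:ℝ)⌋₊ - (K:ℝ)) / (K * (C + 1)) := by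
      field_simp
    rw [h2, div_le_iff₀ (by positivity)]
    linarith
  have hA0 : ∀ i t, 0 ≤ t → 0 ≤ A i t := fun i t ht => curve_nonneg hqs hU hA i ht
  have hM0 : ∀ i t, 0 ≤ t → 0 ≤ M i t := fun i t ht => curve_nonneg hνs hU hM i ht
  have hsum : ∀ t, 0 < t → ∀ x, 0 < A Istar t + A x t := fun t ht x => by
    have := hlow t ht.le
    have := hA0 x t ht.le
    nlinarith [mul_pos hd ht]
  have hscA : ∀ N k : ℕ, ∀ i, (∑ l ∈ Finset.range N, q l i) / (k:ℝ) =
      (N:ℝ) / (k:ℝ) * p N i := fun N k i => by rw [← hSp]; ring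
  have hscM : ∀ N k : ℕ, ∀ i, (∑ l ∈ Finset.range N, ν l i) / (k:ℝ) =
      (N:ℝ) / (k:ℝ) * μ N i := fun N k i => by rw [← hSm]; ring
  simp only [hscA] at hA
  simp only [hscM] at hM
  have hA' := hA
  have hM' := hM
  simp only [← hscA] at hA'
  simp only [← hscM] at hM'
  have gap := core1 (c := c) hXne hd hcnn hx1 (fun i ε hε => curve_lipI hqs hU hA' i hε)
    (fun i ε hε => curve_lipI hνs hU hM' i hε) hA0 hM0 (fun t ht => curve_sum hqs hU hA' ht)
    (fun t ht => curve_sum hνs hU hM' ht) hlow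
    (by
      intro i s r hs hsr _ hne
      obtain ⟨τ, hτ, N, hN, hact⟩ := curve_change hqs hU hA' i hs.le hsr hne
      have hτ0 : 0 < τ := hs.trans_le hτ.1
      refine ⟨τ, hτ, fun j => ?_⟩
      refine le_of_tendsto_of_tendsto
        (hf_tendsto (hA τ hτ0.le N hN) (hM τ hτ0.le N hN) (hsum τ hτ0) j)
        (hf_tendsto (hA τ hτ0.le N hN) (hM τ hτ0.le N hN) (hsum τ hτ0) i) ?_
      filter_upwards [hact, hbig τ hτ0 N hN, hpos] with k h1 h2 h3
      have hl : (0:ℝ) < (N k : ℝ) / (k:ℝ) := by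
        have : (0:ℝ) < N k := by exact_mod_cast (by omega : 0 < N k)
        positivity
      rw [hf_scale _ _ hl, hf_scale _ _ hl]
      exact mul_le_mul_of_nonneg_left
        (LMO_active (hps (N k)).1 (hpI _ h2) (hq (N k)) h1 j) hl.le)
    (by
      intro i s r hs hsr _ hne
      obtain ⟨τ, hτ, N, hN, hact⟩ := curve_change hνs hU hM' i hs.le hsr hne
      have hτ0 : 0 < τ := hs.trans_le hτ.1
      refine ⟨τ, hτ, fun j => ?_⟩
      refine le_of_tendsto_of_tendsto
        (gf_tendsto (hA τ hτ0.le N hN) (hsum τ hτ0) i.1)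
        (gf_tendsto (hA τ hτ0.le N hN) (hsum τ hτ0) j.1) ?_
      filter_upwards [hact, hbig τ hτ0 N hN, hpos] with k h1 h2 h3
      have hl : (0:ℝ) < (N k : ℝ) / (k:ℝ) := by
        have : (0:ℝ) < N k := by exact_mod_cast (by omega : 0 < N k)
        positivity
      rw [gf_scale _ hl, gf_scale _ hl]
      have hP := fun x => add_pos_of_pos_of_nonneg (hpI _ h2) ((hps (N k)).1 x)
      have h4 := LMOmu_active (hν (N k)) h1 j
      rw [Dg_eq (hP _), Dg_eq (hP _)] at h4
      exact mul_le_mul_of_nonneg_left h4 hl.le)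
  have hone : Tendsto (fun k : ℕ => ((k:ℕ):ℝ) / (k:ℝ)) U (nhds 1) := by
    refine tendsto_const_nhds.congr' ?_
    filter_upwards [hpos] with k hk
    rw [div_self hk.ne']
  have hA1 : ∀ i, Tendsto (fun k => p k i) U (nhds (A i 1)) := fun i => by
    refine (hA 1 zero_le_one (fun k => k) hone i).congr' ?_
    filter_upwards [hpos] with k hk
    rw [div_self hk.ne', one_mul]
  have hM1 : ∀ i, Tendsto (fun k => μ k i) U (nhds (M i 1)) := fun i => by
    refine (hM 1 zero_le_one (fun k => k) hone i).congr' ?_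
    filter_upwards [hpos] with k hk
    rw [div_self hk.ne', one_mul]
  have hs1 := hsum 1 one_pos
  have hAs : ∑ i, A i 1 = 1 := curve_sum hqs hU hA' zero_le_one
  have hMs : ∑ i, M i 1 = 1 := curve_sum hνs hU hM' zero_le_one
  have hlim : Tendsto (fun k => Fg θ σ Istar (p k) (μ k)) U
      (nhds (∑ x : {x : Fin K // x ≠ Istar}, M x 1 * gf c Istar (fun l => A l 1) x.1)) := by
    have h1 : Tendsto (fun k => ∑ x : {x : Fin K // x ≠ Istar}, μ k x * gf c Istar (p k) x.1) U
      (nhds (∑ x : {x : Fin K // x ≠ Istar}, M x 1 * gf c Istar (fun l => A l 1) x.1)) :=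
      tendsto_finsetSum _ fun x _ => (hM1 x).mul (gf_tendsto hA1 hs1 x.1)
    refine h1.congr' ?_
    filter_upwards [hU (eventually_gt_atTop K)] with k hk
    refine Finset.sum_congr rfl fun x _ => ?_
    rw [Dg_eq (add_pos_of_pos_of_nonneg (hpI _ hk) ((hps k).1 x.1))]
  set L := ∑ x : {x : Fin K // x ≠ Istar}, M x 1 * gf c Istar (fun l => A l 1) x.1 with hL
  suffices hfin : L = ⨆ pp : stdSimplex ℝ (Fin K),
        ⨅ x : {x : Fin K // x ≠ Istar}, Dg θ σ Istar pp.1 x.1 by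
    rw [← hfin]; exact hlim
  have hLle : ∀ x : {x : Fin K // x ≠ Istar}, L ≤ gf c Istar (fun l => A l 1) x.1 := by
    intro x
    have h1 : L = ∑ i, A i 1 * hf c Istar (fun l => A l 1) (fun l => M l 1) i := by
      rw [hf_sum, hL]
      refine Finset.sum_congr rfl fun y _ => ?_
      rw [gf_eq _ _ (hs1 y.1)]; ring
    rw [h1]
    calc _ ≤ ∑ i, A i 1 * gf c Istar (fun l => A l 1) x.1 :=
          Finset.sum_le_sum fun i _ => mul_le_mul_of_nonneg_left (gap i x) (hA0 i 1 zero_le_one)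
      _ = _ := by rw [← Finset.sum_mul, hAs, one_mul]
  have hup2 : ∀ pp : stdSimplex ℝ (Fin K),
      (⨅ x : {x : Fin K // x ≠ Istar}, Dg θ σ Istar pp.1 x.1) ≤ L := by
    intro pp
    have h1 : ∀ x : {x : Fin K // x ≠ Istar}, Dg θ σ Istar pp.1 x.1 ≤ c x.1 *
        ((A x.1 1 / (A Istar 1 + A x.1 1)) ^ 2 * pp.1 Istar +
          (A Istar 1 / (A Istar 1 + A x.1 1)) ^ 2 * pp.1 x.1) := by
      intro x
      have p1 := pp.2.1 Istar
      have p2 := pp.2.1 x.1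
      by_cases h : 0 < pp.1 Istar + pp.1 x.1
      · rw [Dg_eq h]
        exact gf_le (fun l => A l 1) hcnn pp.1 x.1 (hs1 x.1) h
      · rw [Dg, if_neg h]
        have := hcnn x.1
        positivity
    set m := ⨅ x : {x : Fin K // x ≠ Istar}, Dg θ σ Istar pp.1 x.1 with hm
    have h2 : ∀ x : {x : Fin K // x ≠ Istar}, m ≤ Dg θ σ Istar pp.1 x.1 := fun x =>
      ciInf_le (f := fun x' : {x : Fin K // x ≠ Istar} => Dg θ σ Istar pp.1 x'.1)
        (Set.finite_range _).bddBelow x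
    have h3 : m ≤ ∑ i, pp.1 i * hf c Istar (fun l => A l 1) (fun l => M l 1) i := by
      rw [hf_sum]
      calc m = ∑ x, M x 1 * m := by rw [← Finset.sum_mul, hMs, one_mul]
        _ ≤ _ := by
          refine Finset.sum_le_sum fun x _ => ?_
          rw [mul_assoc]
          exact mul_le_mul_of_nonneg_left ((h2 x).trans (h1 x)) (hM0 x 1 zero_le_one)
    have h4 : ∀ x : {x : Fin K // x ≠ Istar}, m ≤ gf c Istar (fun l => A l 1) x.1 := by
      intro x
      refine h3.trans ?_
      calc _ ≤ ∑ i, pp.1 i * gf c Istar (fun l => A l 1) x.1 :=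
            Finset.sum_le_sum fun i _ => mul_le_mul_of_nonneg_left (gap i x) (pp.2.1 i)
        _ = _ := by rw [← Finset.sum_mul, pp.2.2, one_mul]
    calc m = ∑ x, M x 1 * m := by rw [← Finset.sum_mul, hMs, one_mul]
      _ ≤ L := Finset.sum_le_sum fun x _ =>
          mul_le_mul_of_nonneg_left (h4 x) (hM0 x 1 zero_le_one)
  have hA1s : (fun l => A l 1) ∈ stdSimplex ℝ (Fin K) :=
    ⟨fun i => hA0 i 1 zero_le_one, hAs⟩
  have : Nonempty (stdSimplex ℝ (Fin K)) := ⟨⟨_, hA1s⟩⟩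
  refine le_antisymm ?_ (ciSup_le hup2)
  have hbdd : BddAbove (Set.range fun pp : stdSimplex ℝ (Fin K) =>
      ⨅ x : {x : Fin K // x ≠ Istar}, Dg θ σ Istar pp.1 x.1) :=
    ⟨L, by rintro _ ⟨pp, rfl⟩; exact hup2 pp⟩
  refine le_trans ?_ (le_ciSup hbdd ⟨_, hA1s⟩)
  refine le_ciInf fun x => ?_
  rw [Dg_eq (hs1 x.1)]
  exact hLle x

end
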